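/- Let g be a Markov interval map with g(Γ ∩ dom(g)) ⊆ Γ, let x ∈ E_g, let V ⊆ {1,…,n} be such that â_{i ι(x)} = 0 for every i ∈ V, and equip X with the counting measure. For each pair (i,j) with a_{ij} = 1, set D_j = I_j ∩ X, R_{ij} = {w ∈ I_i : g(w) ∈ I_j ∩ X}, and let f_{ij} : D_j → R_{ij} be the map sending y to the unique point w ∈ I_i with g(w) = y (which exists and is unique since a_{ij} = 1, y ∉ Γ, and g|_{I_i} is injective). Then this data is a relative branching system for the graph G_{A_g} relative to V; explicitly: (1) the sets R_{ij} are pairwise disjoint; (2) the sets D_j are pairwise disjoint; (3) R_{ij} ⊆ I_i ∩ X = D_i; (4) for every i ∈ V with a_{ij} = 1 for at least one j, D_i = ⋃_{j : a_{ij}=1} R_{ij}; and (5) f_{ij} is a bijection from D_j onto R_{ij} whose inverse is the restriction of g to R_{ij}. -/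

import Mathlib

open Set Function

section

/-- The domain `⋃_{j<n} I_j` of a Markov interval map, where `I_j = [a j, b j]`
(indices `j = 0, …, n-1` correspond to the intervals `I_1, …, I_n` of the paper). -/
def mDom (n : ℕ) (a b : ℕ → ℝ) : Set ℝ := ⋃ j, ⋃ (_ : j < n), Icc (a j) (b j)

/-- The union of the (possibly empty) escape intervals `E_j = (b j, a (j+1))`,
for `j + 1 < n`. -/
def mEsc (n : ℕ) (a b : ℕ → ℝ) : Set ℝ := ⋃ j, ⋃ (_ : j + 1 < n), Ioo (b j) (a (j + 1))

/-- The set `Γ` of boundary points of the intervals `I_j = [a j, b j]`. -/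
def mGamma (n : ℕ) (a b : ℕ → ℝ) : Set ℝ := {y | ∃ j < n, y = a j ∨ y = b j}

/-- `g^k(x)` is defined: the iterates `x, g(x), …, g^(k-1)(x)` all lie in the domain. -/
def IterDef (g : ℝ → ℝ) (Dm : Set ℝ) (k : ℕ) (x : ℝ) : Prop := ∀ m < k, g^[m] x ∈ Dm

/-- `g` is a Markov interval map for the partition `I_j = [a j, b j]`, `j < n`, of the
interval `I = [a 0, b (n-1)]` minus the escape intervals `E_j = (b j, a (j+1))`:
on each `I_j`, `g` is continuous and strictly monotone, `im g = I`, and `g(I_i) ∩ dom g`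
is a nonempty union of intervals of the partition (Markov property).  (Values of `g`
outside of its domain `⋃_j I_j` are irrelevant.) -/
structure IsMarkovMap (n : ℕ) (a b : ℕ → ℝ) (g : ℝ → ℝ) : Prop where
  two_le : 2 ≤ n
  lt : ∀ j < n, a j < b j
  le : ∀ j, j + 1 < n → b j ≤ a (j + 1)
  mono : ∀ i < n, StrictMonoOn g (Icc (a i) (b i)) ∨ StrictAntiOn g (Icc (a i) (b i))
  cont : ∀ i < n, ContinuousOn g (Icc (a i) (b i))
  im : g '' mDom n a b = Icc (a 0) (b (n - 1))
  markov : ∀ i < n, ∃ S : Finset ℕ, S.Nonempty ∧ (∀ j ∈ S, j < n) ∧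
    g '' Icc (a i) (b i) ∩ mDom n a b = ⋃ j ∈ S, Icc (a j) (b j)

/-- The transition matrix entry `a_{ij} = 1`, i.e. `g(int I_i) ⊇ int I_j`. -/
def TransOne (a b : ℕ → ℝ) (g : ℝ → ℝ) (i j : ℕ) : Prop :=
  Ioo (a j) (b j) ⊆ g '' Ioo (a i) (b i)

/-- Given the final escape point `ex = e(x)` of the orbit of a point `x` of the escape
set, the set `X = {z ∈ I : g^k(z) = e(x)` for some `k ≥ 0}`. -/
def orbitSet (n : ℕ) (a b : ℕ → ℝ) (g : ℝ → ℝ) (ex : ℝ) : Set ℝ :=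
  {z | z ∈ Icc (a 0) (b (n - 1)) ∧ ∃ k, IterDef g (mDom n a b) k z ∧ g^[k] z = ex}

/-- The set `D_j = I_j ∩ X` of the branching system built from an interval map. -/
def Dset (n : ℕ) (a b : ℕ → ℝ) (g : ℝ → ℝ) (ex : ℝ) (j : ℕ) : Set ℝ :=
  Icc (a j) (b j) ∩ orbitSet n a b g ex

/-- The set `R_{ij} = {w ∈ I_i : g w ∈ I_j ∩ X}` of the branching system built from an
interval map. -/
def Rset (n : ℕ) (a b : ℕ → ℝ) (g : ℝ → ℝ) (ex : ℝ) (i j : ℕ) : Set ℝ :=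
  {w | w ∈ Icc (a i) (b i) ∧ g w ∈ Dset n a b g ex j}

/-! Since `g` maps boundary points of cells to boundary points, no boundary point ever escapes.
So every point whose orbit ends at the escape point lies in the interior of a single cell, where
`g` is injective; this gives disjointness and the inverse branches.  A point of `I_i` with
`i ∈ V` cannot escape in one step, so its image lies in some `I_j`, and the Markov property gives
`I_j ⊆ g(I_i)`.  All that matters about the backward orbit is that it is totally invariant and
avoids the boundary. -/

section MarkovPartition

variable {α ι : Type*} {s V : Set ι} {I U : ι → Set α} {g : α → α} {X : Set α} {i j : ι} {z : α}

/-- The set of boundary points of a family of cells `I i`, `i ∈ s`, with open cells `U i`; it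
plays the role of the set `Γ` of the paper. -/
def cellBoundary (s : Set ι) (I U : ι → Set α) : Set α := ⋃ i ∈ s, I i \ U i

/-- A set-theoretic Markov partition for `g`: cells `I i`, `i ∈ s`, which meet at most in boundary
points, such that `g` is injective on each cell, preserves the boundary, and the image of a cell
contains every cell needed to cover the part of that image inside the cells.  The open cells
`U i` are part of the data: `α` carries no topology. -/
structure IsMarkovPartition (s : Set ι) (I U : ι → Set α) (g : α → α) : Prop where
  interior_subset : ∀ i ∈ s, U i ⊆ I i
  disjoint_interior : ∀ i ∈ s, ∀ j ∈ s, i ≠ j → Disjoint (U i) (I j)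
  injOn : ∀ i ∈ s, InjOn g (I i)
  mapsTo_boundary : MapsTo g (cellBoundary s I U) (cellBoundary s I U)
  exists_cell_subset_image :
    ∀ i ∈ s, ∀ z ∈ I i, g z ∈ ⋃ j ∈ s, I j → ∃ j ∈ s, g z ∈ I j ∧ I j ⊆ g '' I i

/-- A branching system relative to `V` for the graph with vertex set `s` and edge relation `E`,
over a set with the counting measure (so that no null sets or Radon-Nikodym derivatives occur).
The maps `f_{ij} : D j → R i j` are encoded by their common inverse `g`. -/
structure IsRelativeBranchingSystem (s : Set ι) (E : ι → ι → Prop) (V : Set ι)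
    (D : ι → Set α) (R : ι → ι → Set α) (g : α → α) : Prop where
  disjoint_range : ∀ i j k l, i ∈ s → j ∈ s → k ∈ s → l ∈ s →
    E i j → E k l → (i, j) ≠ (k, l) → Disjoint (R i j) (R k l)
  disjoint_domain : ∀ j l, j ∈ s → l ∈ s → j ≠ l → Disjoint (D j) (D l)
  range_subset : ∀ i j, i ∈ s → j ∈ s → E i j → R i j ⊆ D i
  domain_eq_iUnion : ∀ i ∈ V, (∃ j, j ∈ s ∧ E i j) → D i = ⋃ j, ⋃ (_ : j ∈ s ∧ E i j), R i j
  bijOn : ∀ i j, i ∈ s → j ∈ s → E i j → BijOn g (R i j) (D j)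

theorem mem_interior_of_notMem_cellBoundary (hi : i ∈ s) (hz : z ∈ I i)
    (hzΓ : z ∉ cellBoundary s I U) : z ∈ U i := by
  by_contra hzU
  exact hzΓ (mem_biUnion hi ⟨hz, hzU⟩)

namespace IsMarkovPartition

theorem notMem_cellBoundary (hP : IsMarkovPartition s I U g) (hi : i ∈ s) (hz : z ∈ U i) :
    z ∉ cellBoundary s I U := by
  intro hzΓ
  obtain ⟨k, hk, hzI, hzU⟩ := mem_iUnion₂.1 hzΓ
  obtain rfl | hik := eq_or_ne i k
  · exact hzU hz
  · exact disjoint_left.1 (hP.disjoint_interior i hi k hk hik) hz hzI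

theorem disjoint_inter (hP : IsMarkovPartition s I U g) (hXΓ : Disjoint X (cellBoundary s I U))
    (hi : i ∈ s) (hj : j ∈ s) (hij : i ≠ j) : Disjoint (I i ∩ X) (I j ∩ X) := by
  refine disjoint_left.2 fun z hzi hzj => ?_
  have hzU : z ∈ U i :=
    mem_interior_of_notMem_cellBoundary hi hzi.1 (disjoint_left.1 hXΓ hzi.2)
  exact disjoint_left.1 (hP.disjoint_interior i hi j hj hij) hzU hzj.1

theorem interior_subset_image (hP : IsMarkovPartition s I U g) (hi : i ∈ s) (hj : j ∈ s)
    (h : I j ⊆ g '' I i) : U j ⊆ g '' U i := by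
  intro y hy
  obtain ⟨w, hw, rfl⟩ := h (hP.interior_subset j hj hy)
  have hwΓ : w ∉ cellBoundary s I U :=
    fun hw' => hP.notMem_cellBoundary hj hy (hP.mapsTo_boundary hw')
  exact ⟨w, mem_interior_of_notMem_cellBoundary hi hw hwΓ, rfl⟩

theorem existsUnique_preimage (hP : IsMarkovPartition s I U g) (hi : i ∈ s) (hj : j ∈ s)
    (hij : U j ⊆ g '' U i) (hz : z ∈ I j) (hzΓ : z ∉ cellBoundary s I U) :
    ∃! w, w ∈ I i ∧ g w = z := by
  obtain ⟨w, hw, rfl⟩ := hij (mem_interior_of_notMem_cellBoundary hj hz hzΓ)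
  have hwI := hP.interior_subset i hi hw
  exact ⟨w, ⟨hwI, rfl⟩, fun _ hw' => hP.injOn i hi hw'.1 hwI hw'.2⟩

theorem bijOn_inter_preimage (hP : IsMarkovPartition s I U g)
    (hXΓ : Disjoint X (cellBoundary s I U)) (hi : i ∈ s) (hj : j ∈ s) (hij : U j ⊆ g '' U i) :
    BijOn g (I i ∩ g ⁻¹' (I j ∩ X)) (I j ∩ X) := by
  refine ⟨fun w hw => hw.2, (hP.injOn i hi).mono inter_subset_left, fun y hy => ?_⟩
  obtain ⟨w, hw, rfl⟩ :=
    (hP.existsUnique_preimage hi hj hij hy.1 (disjoint_left.1 hXΓ hy.2)).exists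
  exact ⟨w, ⟨hw, hy⟩, rfl⟩

theorem inter_subset_iUnion (hP : IsMarkovPartition s I U g)
    (hX : ∀ z ∈ I i, z ∈ X → g z ∈ X) (hi : i ∈ s) (hmaps : MapsTo g (I i ∩ X) (⋃ j ∈ s, I j)) :
    I i ∩ X ⊆ ⋃ j, ⋃ (_ : j ∈ s ∧ U j ⊆ g '' U i), I i ∩ g ⁻¹' (I j ∩ X) := by
  rintro z ⟨hzI, hzX⟩
  obtain ⟨j, hj, hgz, hsub⟩ := hP.exists_cell_subset_image i hi z hzI (hmaps ⟨hzI, hzX⟩)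
  exact mem_iUnion₂.2 ⟨j, ⟨hj, hP.interior_subset_image hi hj hsub⟩, hzI, hgz, hX z hzI hzX⟩

end IsMarkovPartition

theorem statement12_general (hP : IsMarkovPartition s I U g)
    (hXΓ : Disjoint X (cellBoundary s I U)) (hX : ∀ z ∈ ⋃ i ∈ s, I i, g z ∈ X ↔ z ∈ X)
    (hVs : V ⊆ s) (hV : ∀ i ∈ V, MapsTo g (I i ∩ X) (⋃ j ∈ s, I j)) :
    IsRelativeBranchingSystem s (fun i j => U j ⊆ g '' U i) V
      (fun j => I j ∩ X) (fun i j => I i ∩ g ⁻¹' (I j ∩ X)) g ∧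
    ∀ i j, i ∈ s → j ∈ s → U j ⊆ g '' U i → ∀ y ∈ I j ∩ X, ∃! w, w ∈ I i ∧ g w = y := by
  have hcell : ∀ {i}, i ∈ s → ∀ z ∈ I i, g z ∈ X ↔ z ∈ X :=
    fun hi z hz => hX z (mem_biUnion hi hz)
  have hsub : ∀ {i j}, i ∈ s → I i ∩ g ⁻¹' (I j ∩ X) ⊆ I i ∩ X :=
    fun hi w hw => ⟨hw.1, (hcell hi w hw.1).1 hw.2.2⟩
  refine ⟨⟨fun i j k l hi hj hk hl _ _ hne => ?_, fun j l hj hl => hP.disjoint_inter hXΓ hj hl,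
    fun i j hi _ _ => hsub hi, fun i hiV _ => ?_,
    fun i j hi hj hij => hP.bijOn_inter_preimage hXΓ hi hj hij⟩,
    fun i j hi hj hij y hy => hP.existsUnique_preimage hi hj hij hy.1 (disjoint_left.1 hXΓ hy.2)⟩
  · obtain rfl | hik := eq_or_ne i k
    · have hjl : j ≠ l := fun h => hne (h ▸ rfl)
      exact ((hP.disjoint_inter hXΓ hj hl hjl).preimage g).mono inter_subset_right
        inter_subset_right
    · exact (hP.disjoint_inter hXΓ hi hk hik).mono (hsub hi) (hsub hk)
  · have hi := hVs hiV
    exact (hP.inter_subset_iUnion (fun z hz => (hcell hi z hz).2) hi (hV i hiV)).antisymm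
      (iUnion₂_subset fun _ _ => hsub hi)

end MarkovPartition

section IntervalMap

variable {n : ℕ} {a b : ℕ → ℝ} {g : ℝ → ℝ} {ex z : ℝ}

theorem iterDef_succ {Dm : Set ℝ} {k : ℕ} :
    IterDef g Dm (k + 1) z ↔ z ∈ Dm ∧ IterDef g Dm k (g z) :=
  Nat.forall_lt_succ_left

theorem orbitSet_subset_insert : orbitSet n a b g ex ⊆ insert ex (mDom n a b) := by
  rintro z ⟨-, _ | k, hdef, hz⟩
  · exact Or.inl hz
  · exact Or.inr (iterDef_succ.1 hdef).1

namespace IsMarkovMap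

theorem right_le_left (hg : IsMarkovMap n a b g) {j l : ℕ} (hjl : j < l) (hl : l < n) :
    b j ≤ a l := by
  induction l, hjl using Nat.le_induction with
  | base => exact hg.le j hl
  | succ l _ ih =>
    have hln : l < n := by omega
    exact ((ih hln).trans (hg.lt l hln).le).trans (hg.le l hl)

theorem left_le_left (hg : IsMarkovMap n a b g) {j l : ℕ} (hjl : j ≤ l) (hl : l < n) :
    a j ≤ a l := by
  obtain rfl | hjl := hjl.eq_or_lt
  · rfl
  · exact (hg.lt j (hjl.trans hl)).le.trans (hg.right_le_left hjl hl)

theorem right_le_right (hg : IsMarkovMap n a b g) {j l : ℕ} (hjl : j ≤ l) (hl : l < n) :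
    b j ≤ b l := by
  obtain rfl | hjl := hjl.eq_or_lt
  · rfl
  · exact (hg.right_le_left hjl hl).trans (hg.lt l hl).le

theorem mDom_subset (hg : IsMarkovMap n a b g) : mDom n a b ⊆ Icc (a 0) (b (n - 1)) :=
  iUnion₂_subset fun j hj =>
    Icc_subset_Icc (hg.left_le_left j.zero_le hj) (hg.right_le_right (by omega) (by omega))

theorem mapsTo_mDom (hg : IsMarkovMap n a b g) :
    MapsTo g (mDom n a b) (Icc (a 0) (b (n - 1))) :=
  mapsTo_iff_image_subset.2 hg.im.subset

theorem notMem_mDom_of_mem_gap (hg : IsMarkovMap n a b g) {k : ℕ} (hk : k + 1 < n)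
    (hz : z ∈ Ioo (b k) (a (k + 1))) : z ∉ mDom n a b := by
  intro hzdom
  obtain ⟨l, hl, hzl⟩ := mem_iUnion₂.1 hzdom
  obtain hlk | hkl := Nat.lt_or_ge k l
  · exact (hz.2.trans_le (hg.left_le_left hlk hl)).not_ge hzl.1
  · exact ((hg.right_le_right hkl (by omega)).trans_lt hz.1).not_ge hzl.2

theorem disjoint_Ioo_Icc (hg : IsMarkovMap n a b g) {i j : ℕ} (hi : i < n) (hj : j < n)
    (hij : i ≠ j) : Disjoint (Ioo (a i) (b i)) (Icc (a j) (b j)) := by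
  refine disjoint_left.2 fun z hzi hzj => ?_
  obtain hij | hji := hij.lt_or_gt
  · exact (hzi.2.trans_le (hg.right_le_left hij hj)).not_ge hzj.1
  · exact ((hg.right_le_left hji hi).trans_lt hzi.1).not_ge hzj.2

theorem cellBoundary_eq (hg : IsMarkovMap n a b g) :
    cellBoundary (Iio n) (fun j => Icc (a j) (b j)) (fun j => Ioo (a j) (b j)) =
      mGamma n a b := by
  have hends : ∀ j ∈ Iio n, Icc (a j) (b j) \ Ioo (a j) (b j) = {a j, b j} :=
    fun j hj => Icc_sdiff_Ioo_same (hg.lt j hj).le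
  rw [cellBoundary, iUnion₂_congr hends]
  ext z
  simp only [mGamma, mem_iUnion, mem_Iio, mem_insert_iff, mem_singleton_iff, exists_prop,
    mem_ofPred_eq]

theorem mGamma_subset_mDom (hg : IsMarkovMap n a b g) : mGamma n a b ⊆ mDom n a b := by
  rw [← hg.cellBoundary_eq]
  exact iUnion₂_mono fun _ _ => sdiff_subset

theorem isMarkovPartition (hg : IsMarkovMap n a b g)
    (hΓ : MapsTo g (mGamma n a b) (mGamma n a b)) :
    IsMarkovPartition (Iio n) (fun j => Icc (a j) (b j)) (fun j => Ioo (a j) (b j)) g where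
  interior_subset _ _ := Ioo_subset_Icc_self
  disjoint_interior _ hi _ hj := hg.disjoint_Ioo_Icc hi hj
  injOn i hi := (hg.mono i hi).elim StrictMonoOn.injOn StrictAntiOn.injOn
  mapsTo_boundary := by rwa [hg.cellBoundary_eq]
  exists_cell_subset_image i hi z hz hgz := by
    obtain ⟨S, -, hSn, hS⟩ := hg.markov i hi
    obtain ⟨j, hjS, hj⟩ := mem_iUnion₂.1 (hS.subset ⟨mem_image_of_mem g hz, hgz⟩)
    exact ⟨j, hSn j hjS, hj, fun y hy => (hS.superset (mem_biUnion hjS hy)).1⟩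

theorem disjoint_orbitSet_mGamma (hg : IsMarkovMap n a b g)
    (hΓ : MapsTo g (mGamma n a b) (mGamma n a b)) (hex : ex ∉ mDom n a b) :
    Disjoint (orbitSet n a b g ex) (mGamma n a b) := by
  refine disjoint_left.2 ?_
  rintro z ⟨-, k, -, rfl⟩ hzΓ
  exact hex (hg.mGamma_subset_mDom (hΓ.iterate k hzΓ))

theorem apply_mem_orbitSet_iff (hg : IsMarkovMap n a b g) (hex : ex ∉ mDom n a b)
    (hz : z ∈ mDom n a b) : g z ∈ orbitSet n a b g ex ↔ z ∈ orbitSet n a b g ex := by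
  constructor
  · rintro ⟨-, k, hdef, hk⟩
    exact ⟨hg.mDom_subset hz, k + 1, iterDef_succ.2 ⟨hz, hdef⟩, hk⟩
  · rintro ⟨-, _ | k, hdef, hk⟩
    · obtain rfl : z = ex := hk
      exact absurd hz hex
    · exact ⟨hg.mapsTo_mDom hz, k, (iterDef_succ.1 hdef).2, hk⟩

theorem mapsTo_Dset_mDom (hg : IsMarkovMap n a b g)
    (hΓ : MapsTo g (mGamma n a b) (mGamma n a b)) (hex : ex ∉ mDom n a b) {i : ℕ} (hi : i < n)
    (hexi : ex ∉ g '' Ioo (a i) (b i)) : MapsTo g (Dset n a b g ex i) (mDom n a b) := by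
  rintro z ⟨hzI, hzX⟩
  have hzΓ : z ∉ cellBoundary (Iio n) (fun j => Icc (a j) (b j)) (fun j => Ioo (a j) (b j)) := by
    rw [hg.cellBoundary_eq]
    exact disjoint_left.1 (hg.disjoint_orbitSet_mGamma hΓ hex) hzX
  have hzint : z ∈ Ioo (a i) (b i) :=
    mem_interior_of_notMem_cellBoundary (I := fun j => Icc (a j) (b j))
      (U := fun j => Ioo (a j) (b j)) hi hzI hzΓ
  have hgz : g z ∈ orbitSet n a b g ex :=
    (hg.apply_mem_orbitSet_iff hex (mem_biUnion hi hzI)).2 hzX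
  exact (orbitSet_subset_insert hgz).resolve_left fun h => hexi ⟨z, hzint, h⟩

end IsMarkovMap

end IntervalMap

/-- Let `g` be a Markov interval map with `g(Γ ∩ dom g) ⊆ Γ`, `x ∈ E_g`
with final escape point `ex = g^[τx] x ∈ E_{kι}`, and `V ⊆ {1,…,n}` with `â_{i ι(x)} = 0`
for every `i ∈ V`.  With `X` equipped with the counting measure, the data
`D_j = I_j ∩ X`, `R_{ij} = {w ∈ I_i : g w ∈ I_j ∩ X}` and `f_{ij} = (g|_{I_i})⁻¹|_{D_j}`
is a relative branching system for the graph `G_{A_g}` relative to `V`:  (1) the `R_{ij}`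
are pairwise disjoint;  (2) the `D_j` are pairwise disjoint;  (3) `R_{ij} ⊆ D_i`;
(4) for `i ∈ V` emitting at least one edge, `D_i = ⋃_{j : a_{ij} = 1} R_{ij}`;  and
(5) each `y ∈ D_j` has a unique `g`-preimage in `I_i` (so that `f_{ij}` is well defined)
and `g` restricts to a bijection from `R_{ij}` onto `D_j` (so that `f_{ij}` is a bijection
from `D_j` onto `R_{ij}` whose inverse is the restriction of `g` to `R_{ij}`). -/
theorem statement12 (n : ℕ) (a b : ℕ → ℝ) (g : ℝ → ℝ) (hg : IsMarkovMap n a b g)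
    (hΓ : ∀ y ∈ mGamma n a b ∩ mDom n a b, g y ∈ mGamma n a b)
    (x : ℝ) (hxI : x ∈ Icc (a 0) (b (n - 1)))
    (τx : ℕ) (hτ1 : 1 ≤ τx) (hτdef : IterDef g (mDom n a b) τx x)
    (hτesc : g^[τx] x ∈ mEsc n a b)
    (hτmin : ∀ k, 1 ≤ k → IterDef g (mDom n a b) k x → g^[k] x ∈ mEsc n a b → τx ≤ k)
    (kι : ℕ) (hkι : kι + 1 < n) (hexE : g^[τx] x ∈ Ioo (b kι) (a (kι + 1)))
    (V : Set ℕ) (hVn : ∀ i ∈ V, i < n)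
    (hV0 : ∀ i ∈ V, Ioo (a i) (b i) ∩ g ⁻¹' (Ioo (b kι) (a (kι + 1))) = ∅) :
    (∀ i j k l, i < n → j < n → k < n → l < n →
      TransOne a b g i j → TransOne a b g k l → (i, j) ≠ (k, l) →
      Rset n a b g (g^[τx] x) i j ∩ Rset n a b g (g^[τx] x) k l = ∅) ∧
    (∀ j l, j < n → l < n → j ≠ l →
      Dset n a b g (g^[τx] x) j ∩ Dset n a b g (g^[τx] x) l = ∅) ∧
    (∀ i j, i < n → j < n → TransOne a b g i j →
      Rset n a b g (g^[τx] x) i j ⊆ Dset n a b g (g^[τx] x) i) ∧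
    (∀ i ∈ V, (∃ j, j < n ∧ TransOne a b g i j) →
      Dset n a b g (g^[τx] x) i =
        ⋃ j, ⋃ (_ : j < n ∧ TransOne a b g i j), Rset n a b g (g^[τx] x) i j) ∧
    (∀ i j, i < n → j < n → TransOne a b g i j →
      (∀ y ∈ Dset n a b g (g^[τx] x) j, ∃! w, w ∈ Icc (a i) (b i) ∧ g w = y) ∧
      Set.BijOn g (Rset n a b g (g^[τx] x) i j) (Dset n a b g (g^[τx] x) j)) := by
  have hΓ' : MapsTo g (mGamma n a b) (mGamma n a b) :=
    fun y hy => hΓ y ⟨hy, hg.mGamma_subset_mDom hy⟩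
  have hex : g^[τx] x ∉ mDom n a b := hg.notMem_mDom_of_mem_gap hkι hexE
  have hV : ∀ i ∈ V, g^[τx] x ∉ g '' Ioo (a i) (b i) := by
    rintro i hi ⟨z, hz, hgz⟩
    exact (hV0 i hi).subset ⟨hz, mem_preimage.2 (hgz.symm ▸ hexE)⟩
  obtain ⟨hsys, hpre⟩ := statement12_general (hg.isMarkovPartition hΓ')
    (hg.cellBoundary_eq.symm ▸ hg.disjoint_orbitSet_mGamma hΓ' hex)
    (fun _ hz => hg.apply_mem_orbitSet_iff hex hz) hVn
    (fun i hi => hg.mapsTo_Dset_mDom hΓ' hex (hVn i hi) (hV i hi))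
  exact ⟨fun i j k l hi hj hk hl hij hkl hne =>
      (hsys.disjoint_range i j k l hi hj hk hl hij hkl hne).inter_eq,
    fun j l hj hl hne => (hsys.disjoint_domain j l hj hl hne).inter_eq,
    hsys.range_subset, hsys.domain_eq_iUnion,
    fun i j hi hj hij => ⟨hpre i j hi hj hij, hsys.bijOn i j hi hj hij⟩⟩

end
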